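/- Every bounded subset B of the space O^m_{s_ω}(ℝ^N) (smooth f with q_{m,g}(f) < ∞ for all g ∈ S_ω(ℝ^N), topologized by the norms q_{m,g}) is contained and bounded in some Banach space O^m_{n₀,ω}(ℝ^N); i.e., there exists n₀ ∈ ℕ with sup_{f∈B} r_{m,n₀}(f) < ∞. -/

import Mathlib

open Real Set Filter

noncomputable section

abbrev Euc (N : ℕ) := EuclideanSpace ℝ (Fin N)

/-- single partial derivative in direction `i` -/
noncomputable def pd {N : ℕ} (i : Fin N) (f : Euc N → ℝ) : Euc N → ℝ :=
  fun x => fderiv ℝ f x (EuclideanSpace.single i 1)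

/-- iterated partial derivative `∂^α` for a multi-index `α` -/
noncomputable def pdm {N : ℕ} (α : Fin N → ℕ) (f : Euc N → ℝ) : Euc N → ℝ :=
  ((List.ofFn fun i : Fin N => (pd i)^[α i]).foldr (· ∘ ·) id) f

/-- length `|α|` of a multi-index -/
def msize {N : ℕ} (α : Fin N → ℕ) : ℕ := ∑ i, α i

/-- the Young conjugate `φ*_ω(s) = sup_{t ≥ 0} (s t - ω(e^t))` -/
noncomputable def phiStar (ω : ℝ → ℝ) (s : ℝ) : ℝ :=
  sSup {y : ℝ | ∃ t : ℝ, 0 ≤ t ∧ y = s * t - ω (Real.exp t)}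

/-- non-quasianalytic weight function in the sense of Braun-Meise-Taylor -/
structure IsWeightFun (ω : ℝ → ℝ) : Prop where
  nonneg : ∀ t, 0 ≤ t → 0 ≤ ω t
  cont : ContinuousOn ω (Ici 0)
  mono : MonotoneOn ω (Ici 0)
  alpha : ∃ K : ℝ, 1 ≤ K ∧ ∀ t, 0 ≤ t → ω (2 * t) ≤ K * (1 + ω t)
  beta : MeasureTheory.IntegrableOn (fun t => ω t / (1 + t ^ 2)) (Ici 1)
  gamma : ∃ a : ℝ, ∃ b : ℝ, 0 < b ∧ ∀ t, 0 ≤ t → a + b * Real.log (1 + t) ≤ ω t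
  delta : ConvexOn ℝ univ (fun t => ω (Real.exp t))

/-- membership in `𝒮_ω(ℝ^N)` -/
def MemS (ω : ℝ → ℝ) {N : ℕ} (f : Euc N → ℝ) : Prop :=
  ContDiff ℝ (⊤ : ℕ∞) f ∧ ∀ lam mu : ℝ, 0 < lam → 0 < mu → ∃ C : ℝ,
    ∀ (α : Fin N → ℕ) (x : Euc N),
      Real.exp (mu * ω ‖x‖) * |pdm α f x| ≤ C * Real.exp (lam * phiStar ω (msize α / lam))

/-- membership in `ℰ_ω(ℝ^N)` -/
def MemE (ω : ℝ → ℝ) {N : ℕ} (f : Euc N → ℝ) : Prop :=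
  ContDiff ℝ (⊤ : ℕ∞) f ∧ ∀ K : Set (Euc N), IsCompact K → ∀ m : ℕ, 0 < m → ∃ C : ℝ,
    ∀ (α : Fin N → ℕ), ∀ x ∈ K, |pdm α f x| ≤ C * Real.exp (m * phiStar ω (msize α / m))

/-- membership in `𝒟_ω(ℝ^N)` -/
def MemD (ω : ℝ → ℝ) {N : ℕ} (f : Euc N → ℝ) : Prop :=
  MemE ω f ∧ HasCompactSupport f

/-- membership in `𝒪_{M,ω}(ℝ^N)`: slowly increasing functions of Beurling type -/
def MemOM (ω : ℝ → ℝ) {N : ℕ} (f : Euc N → ℝ) : Prop :=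
  ContDiff ℝ (⊤ : ℕ∞) f ∧ ∀ m : ℕ, 0 < m → ∃ C : ℝ, 0 < C ∧ ∃ n : ℕ,
    ∀ (α : Fin N → ℕ) (x : Euc N),
      |pdm α f x| ≤ C * Real.exp (n * ω ‖x‖ + m * phiStar ω (msize α / m))

/-- the weighted sup norm `r_{m,n}` -/
noncomputable def rNorm (ω : ℝ → ℝ) {N : ℕ} (m : ℕ) (n : ℤ) (f : Euc N → ℝ) : ℝ :=
  ⨆ p : (Fin N → ℕ) × Euc N,
    |pdm p.1 f p.2| * Real.exp (-(n : ℝ) * ω ‖p.2‖ - m * phiStar ω (msize p.1 / m))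

/-- finiteness of the norm `r_{m,n}` -/
def rBdd (ω : ℝ → ℝ) {N : ℕ} (m : ℕ) (n : ℤ) (f : Euc N → ℝ) : Prop :=
  BddAbove (Set.range fun p : (Fin N → ℕ) × Euc N =>
    |pdm p.1 f p.2| * Real.exp (-(n : ℝ) * ω ‖p.2‖ - m * phiStar ω (msize p.1 / m)))

/-- membership in `𝒪^m_{n,ω}(ℝ^N)` -/
def MemOmn (ω : ℝ → ℝ) {N : ℕ} (m : ℕ) (n : ℤ) (f : Euc N → ℝ) : Prop :=
  ContDiff ℝ (⊤ : ℕ∞) f ∧ rBdd ω m n f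

/-- the norm `q_{λ,μ}` of `𝒮_ω(ℝ^N)` -/
noncomputable def qNorm (ω : ℝ → ℝ) {N : ℕ} (lam mu : ℝ) (f : Euc N → ℝ) : ℝ :=
  ⨆ p : (Fin N → ℕ) × Euc N,
    Real.exp (-(lam * phiStar ω (msize p.1 / lam)) + mu * ω ‖p.2‖) * |pdm p.1 f p.2|

/-- finiteness of the norm `q_{m,g}` -/
def qgBdd (ω : ℝ → ℝ) {N : ℕ} (m : ℕ) (g f : Euc N → ℝ) : Prop :=
  BddAbove (Set.range fun p : (Fin N → ℕ) × Euc N =>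
    |g p.2| * |pdm p.1 f p.2| * Real.exp (-(m : ℝ) * phiStar ω (msize p.1 / m)))

end

/-!
The proof is a gliding hump. If no `n₀` works, there are for every `j` some `f_j ∈ B`, `α_j` and
`x_j` at which the weighted derivative exceeds `4^j e^{j ω(x_j)}`. For a fixed nonnegative
`χ ∈ 𝒮_ω` with `χ(0) > 0`, the series `g = ∑ 2^{-j} e^{-j ω(x_j)} χ(· - x_j)` converges in `𝒮_ω`,
and `g(x_j) ≥ 2^{-j} e^{-j ω(x_j)} χ(0)`, so the norms `q_{m,g}(f_j) ≥ 2^j χ(0)` are unbounded.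

When `φ*_ω` is finite, `χ` can be the Gaussian: Cauchy's estimates bound its derivatives by
`C_R R^{-n} n! e^{-|x|²/2}` for every `R`, and `ω` grows at most linearly. Otherwise `ω` grows at
most logarithmically; as `phiStar` is `0` where `φ*_ω` is infinite, the derivatives of `χ` must
then be bounded uniformly in their order, and `χ` is the square of a function with Fourier
transform supported in a small ball.
-/

section MultiIndex

theorem multiIndex_induction {ι : Type*} [Finite ι] [DecidableEq ι] {P : (ι → ℕ) → Prop}
    (zero : P 0) (add_single : ∀ α i, P α → P (α + Pi.single i 1)) (α : ι → ℕ) : P α := by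
  have add_nsmul (i : ι) (n : ℕ) (β : ι → ℕ) (hβ : P β) : P (β + Pi.single i n) := by
    induction n with
    | zero => simpa using hβ
    | succ n ih => simpa [Pi.single_add, add_assoc] using add_single _ i ih
  cases nonempty_fintype ι
  have partial_sum (s : Finset ι) : P (∑ i ∈ s, Pi.single i (α i)) := by
    induction s using Finset.induction_on with
    | empty => simpa using zero
    | insert i s hi ih =>
      rw [Finset.sum_insert hi, add_comm]
      exact add_nsmul i (α i) _ ih
  simpa [Finset.univ_sum_single] using partial_sum Finset.univ

theorem msize_add_single {N : ℕ} (α : Fin N → ℕ) (i : Fin N) :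
    msize (α + Pi.single i 1) = msize α + 1 := by
  simp [msize, Finset.sum_add_distrib]

end MultiIndex

section PartialDerivatives

variable {N : ℕ} {f : Euc N → ℝ}

theorem contDiff_pd (i : Fin N) (hf : ContDiff ℝ (⊤ : ℕ∞) f) : ContDiff ℝ (⊤ : ℕ∞) (pd i f) :=
  (hf.fderiv_right (by simp)).clm_apply contDiff_const

theorem contDiff_pd_iterate (i : Fin N) (n : ℕ) (hf : ContDiff ℝ (⊤ : ℕ∞) f) :
    ContDiff ℝ (⊤ : ℕ∞) ((pd i)^[n] f) := by
  induction n with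
  | zero => exact hf
  | succ n ih => exact Function.iterate_succ_apply' (pd i) n f ▸ contDiff_pd i ih

theorem pd_comm (hf : ContDiff ℝ (⊤ : ℕ∞) f) (i j : Fin N) : pd i (pd j f) = pd j (pd i f) := by
  have hdiff : Differentiable ℝ (fderiv ℝ f) :=
    (hf.fderiv_right (m := (⊤ : ℕ∞)) (by simp)).differentiable (by simp)
  have hpd (k l : Fin N) (x : Euc N) : pd k (pd l f) x =
      fderiv ℝ (fderiv ℝ f) x (EuclideanSpace.single k 1) (EuclideanSpace.single l 1) := by
    change fderiv ℝ (fun y => fderiv ℝ f y (EuclideanSpace.single l 1)) x _ = _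
    simp [fderiv_clm_apply (hdiff x) (differentiableAt_const _)]
  ext x
  rw [hpd, hpd]
  exact (hf.contDiffAt.isSymmSndFDerivAt (by
    simpa using WithTop.coe_le_coe.2 (le_top : (2 : ℕ∞) ≤ ⊤))).eq _ _

theorem pd_iterate_comm (hf : ContDiff ℝ (⊤ : ℕ∞) f) (i j : Fin N) (n : ℕ) :
    (pd j)^[n] (pd i f) = pd i ((pd j)^[n] f) := by
  induction n with
  | zero => rfl
  | succ n ih =>
    simp only [Function.iterate_succ_apply', ih]
    exact pd_comm (contDiff_pd_iterate j n hf) j i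

theorem pdm_eq_foldr (α : Fin N → ℕ) (f : Euc N → ℝ) :
    pdm α f = (List.finRange N).foldr (fun i => (pd i)^[α i]) f := by
  rw [pdm, List.ofFn_eq_map]
  induction List.finRange N with
  | nil => rfl
  | cons i l ih => simp [ih]

theorem contDiff_foldr_pd (α : Fin N → ℕ) (hf : ContDiff ℝ (⊤ : ℕ∞) f) (l : List (Fin N)) :
    ContDiff ℝ (⊤ : ℕ∞) (l.foldr (fun i => (pd i)^[α i]) f) := by
  induction l with
  | nil => exact hf
  | cons i l ih => exact contDiff_pd_iterate i (α i) ih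

theorem contDiff_pdm (α : Fin N → ℕ) (hf : ContDiff ℝ (⊤ : ℕ∞) f) :
    ContDiff ℝ (⊤ : ℕ∞) (pdm α f) := by
  rw [pdm_eq_foldr]
  exact contDiff_foldr_pd α hf _

theorem pdm_zero (f : Euc N → ℝ) : pdm 0 f = f := by
  rw [pdm_eq_foldr]
  induction List.finRange N with
  | nil => rfl
  | cons _ _ ih => exact ih

theorem foldr_pd_add_single (α : Fin N → ℕ) (i : Fin N) (hf : ContDiff ℝ (⊤ : ℕ∞) f)
    {l : List (Fin N)} (hl : l.Nodup) (hi : i ∈ l) :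
    l.foldr (fun j => (pd j)^[(α + Pi.single i 1 : Fin N → ℕ) j]) f =
      pd i (l.foldr (fun j => (pd j)^[α j]) f) := by
  induction l with
  | nil => simp at hi
  | cons j l ih =>
    obtain ⟨hj, hl⟩ := List.nodup_cons.1 hl
    rw [List.foldr_cons, List.foldr_cons]
    rcases eq_or_ne i j with rfl | hij
    · have htail : l.foldr (fun k => (pd k)^[(α + Pi.single i 1 : Fin N → ℕ) k]) f =
          l.foldr (fun k => (pd k)^[α k]) f :=
        List.foldr_ext _ _ _ fun k hk _ => by simp [ne_of_mem_of_not_mem hk hj]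
      rw [htail, ← Function.iterate_succ_apply' (pd i)]
      simp
    · rw [ih hl ((List.mem_cons.1 hi).resolve_left hij), ← pd_iterate_comm
        (contDiff_foldr_pd α hf l)]
      simp [hij.symm]

theorem pdm_add_single (α : Fin N → ℕ) (i : Fin N) (hf : ContDiff ℝ (⊤ : ℕ∞) f) :
    pdm (α + Pi.single i 1) f = pd i (pdm α f) := by
  simpa only [pdm_eq_foldr] using
    foldr_pd_add_single α i hf (List.nodup_finRange N) (List.mem_finRange i)

theorem pdm_pd (α : Fin N → ℕ) (i : Fin N) (hf : ContDiff ℝ (⊤ : ℕ∞) f) :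
    pdm α (pd i f) = pdm (α + Pi.single i 1) f := by
  rw [pdm_add_single α i hf]
  induction α using multiIndex_induction with
  | zero => simp only [pdm_zero]
  | add_single α j ih =>
    rw [pdm_add_single α j (contDiff_pd i hf), ih, pdm_add_single α j hf,
      pd_comm (contDiff_pdm α hf)]

theorem norm_iteratedFDeriv_pd_le (i : Fin N) (hf : ContDiff ℝ (⊤ : ℕ∞) f) (k : ℕ) (x : Euc N) :
    ‖iteratedFDeriv ℝ k (pd i f) x‖ ≤ ‖iteratedFDeriv ℝ (k + 1) f x‖ := by
  have h := norm_iteratedFDeriv_clm_apply_const (𝕜 := ℝ) (f := fderiv ℝ f)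
    (c := EuclideanSpace.single i (1 : ℝ)) (x := x) (N := ((⊤ : ℕ∞) : WithTop ℕ∞)) (n := k)
    (hf.fderiv_right (by simp)).contDiffAt (by exact_mod_cast le_top)
  rwa [norm_iteratedFDeriv_fderiv, PiLp.norm_single, norm_one, one_mul] at h

theorem norm_iteratedFDeriv_pdm_le (α : Fin N → ℕ) (hf : ContDiff ℝ (⊤ : ℕ∞) f) (k : ℕ)
    (x : Euc N) :
    ‖iteratedFDeriv ℝ k (pdm α f) x‖ ≤ ‖iteratedFDeriv ℝ (k + msize α) f x‖ := by
  induction α using multiIndex_induction generalizing k with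
  | zero => rw [pdm_zero, show msize (0 : Fin N → ℕ) = 0 by simp [msize], add_zero]
  | add_single α i ih =>
    rw [pdm_add_single α i hf, msize_add_single, ← add_assoc, Nat.add_right_comm]
    exact (norm_iteratedFDeriv_pd_le i (contDiff_pdm α hf) k x).trans (ih (k + 1))

theorem abs_pdm_le (α : Fin N → ℕ) (hf : ContDiff ℝ (⊤ : ℕ∞) f) (x : Euc N) :
    |pdm α f x| ≤ ‖iteratedFDeriv ℝ (msize α) f x‖ := by
  have h := norm_iteratedFDeriv_pdm_le α hf 0 x
  rwa [norm_iteratedFDeriv_zero, zero_add] at h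

theorem fderiv_eq_sum_pd (f : Euc N → ℝ) (x : Euc N) :
    fderiv ℝ f x = ∑ i, pd i f x • (EuclideanSpace.proj i : Euc N →L[ℝ] ℝ) := by
  ext v
  conv_lhs => rw [← (EuclideanSpace.basisFun (Fin N) ℝ).sum_repr v]
  simp [pd, mul_comm]

theorem exists_norm_iteratedFDeriv_le (hf : ContDiff ℝ (⊤ : ℕ∞) f)
    (hbdd : ∀ α, ∃ C, ∀ x, |pdm α f x| ≤ C) (k : ℕ) :
    ∃ M, ∀ x, ‖iteratedFDeriv ℝ k f x‖ ≤ M := by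
  induction k generalizing f with
  | zero =>
    obtain ⟨C, hC⟩ := hbdd 0
    exact ⟨C, fun x => by simpa [pdm_zero] using hC x⟩
  | succ k ih =>
    have hpd (i : Fin N) : ∃ M, ∀ x, ‖iteratedFDeriv ℝ k (pd i f) x‖ ≤ M :=
      ih (contDiff_pd i hf) fun α => by simpa only [pdm_pd α i hf] using hbdd _
    choose M hM using hpd
    let L (i : Fin N) : ℝ →L[ℝ] Euc N →L[ℝ] ℝ :=
      ContinuousLinearMap.toSpanSingleton ℝ (EuclideanSpace.proj i)
    have hfderiv : fderiv ℝ f = fun x => ∑ i, (L i ∘ pd i f) x := funext (fderiv_eq_sum_pd f)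
    have hcd (i : Fin N) : ContDiff ℝ k (pd i f) := (contDiff_pd i hf).of_le (mod_cast le_top)
    refine ⟨∑ i, ‖L i‖ * M i, fun x => ?_⟩
    rw [← norm_iteratedFDeriv_fderiv, hfderiv, iteratedFDeriv_fun_sum_apply
      fun i _ => ((L i).contDiff.comp (hcd i)).contDiffAt]
    exact norm_sum_le_of_le _ fun i _ =>
      ((L i).norm_iteratedFDeriv_comp_left (hcd i).contDiffAt le_rfl).trans
        (by gcongr; exact hM i x)

theorem pdm_const_mul_comp_sub (α : Fin N → ℕ) (hf : ContDiff ℝ (⊤ : ℕ∞) f) (c : ℝ)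
    (a : Euc N) : pdm α (fun x => c * f (x - a)) = fun x => c * pdm α f (x - a) := by
  have hsmooth : ContDiff ℝ (⊤ : ℕ∞) fun x => c * f (x - a) := by fun_prop
  induction α using multiIndex_induction with
  | zero => simp only [pdm_zero]
  | add_single α i ih =>
    ext x
    have hfderiv : fderiv ℝ (fun x => c * pdm α f (x - a)) x = c • fderiv ℝ (pdm α f) (x - a) := by
      rw [← fderiv_comp_sub]
      exact congrFun (fderiv_const_smul_field (𝕜 := ℝ) (f := fun x => pdm α f (x - a)) c) x
    rw [pdm_add_single α i hsmooth, ih, pdm_add_single α i hf]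
    simp [pd, hfderiv]

theorem pd_tsum {ι : Type*} {F : ι → Euc N → ℝ} {u₀ u₁ : ι → ℝ} (i : Fin N)
    (hF : ∀ j, Differentiable ℝ (F j)) (hu₀ : Summable u₀) (hu₁ : Summable u₁)
    (hF₀ : ∀ j x, ‖F j x‖ ≤ u₀ j) (hF₁ : ∀ j x, ‖fderiv ℝ (F j) x‖ ≤ u₁ j) :
    pd i (fun x => ∑' j, F j x) = fun x => ∑' j, pd i (F j) x := by
  ext x
  rw [pd, fderiv_tsum_apply hu₁ hF hF₁ (hu₀.of_norm_bounded fun j => hF₀ j 0)]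
  exact (ContinuousLinearMap.apply ℝ ℝ (EuclideanSpace.single i (1 : ℝ) : Euc N)).map_tsum
    (hu₁.of_norm_bounded fun j => hF₁ j x)

theorem pdm_tsum {ι : Type*} {F : ι → Euc N → ℝ} {u : ℕ → ι → ℝ} (α : Fin N → ℕ)
    (hF : ∀ j, ContDiff ℝ (⊤ : ℕ∞) (F j)) (hu : ∀ k, Summable (u k))
    (hFu : ∀ k j x, ‖iteratedFDeriv ℝ k (F j) x‖ ≤ u k j) :
    pdm α (fun x => ∑' j, F j x) = fun x => ∑' j, pdm α (F j) x := by
  have hsmooth : ContDiff ℝ (⊤ : ℕ∞) fun x => ∑' j, F j x :=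
    contDiff_tsum hF (fun k _ => hu k) fun k j x _ => hFu k j x
  induction α using multiIndex_induction with
  | zero => simp only [pdm_zero]
  | add_single α i ih =>
    have hbound (k : ℕ) (j : ι) (x : Euc N) :
        ‖iteratedFDeriv ℝ k (pdm α (F j)) x‖ ≤ u (k + msize α) j :=
      (norm_iteratedFDeriv_pdm_le α (hF j) k x).trans (hFu _ j x)
    rw [pdm_add_single α i hsmooth, ih]
    simp only [fun j => pdm_add_single α i (hF j)]
    refine pd_tsum i (fun j => (contDiff_pdm α (hF j)).differentiable (by simp))
      (hu (0 + msize α)) (hu (1 + msize α)) (fun j x => ?_) fun j x => ?_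
    · simpa only [norm_iteratedFDeriv_zero] using hbound 0 j x
    · simpa only [norm_iteratedFDeriv_one] using hbound 1 j x

theorem pd_prod {h : Fin N → ℝ → ℝ} (hh : ∀ j, Differentiable ℝ (h j)) (i : Fin N) :
    pd i (fun x => ∏ j, h j (x j)) =
      fun x => ∏ j, Function.update h i (deriv (h i)) j (x j) := by
  ext x
  have hfactor (j : Fin N) : HasFDerivAt (fun y : Euc N => h j (y j))
      (deriv (h j) (x j) • (EuclideanSpace.proj j : Euc N →L[ℝ] ℝ)) x :=
    (hh j (x j)).hasDerivAt.comp_hasFDerivAt x (EuclideanSpace.proj j : Euc N →L[ℝ] ℝ).hasFDerivAt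
  rw [pd, (HasFDerivAt.finsetProd (u := Finset.univ) fun j _ => hfactor j).fderiv,
    ← Finset.mul_prod_erase Finset.univ _ (Finset.mem_univ i)]
  have htail : ∏ j ∈ Finset.univ.erase i, Function.update h i (deriv (h i)) j (x j) =
      ∏ j ∈ Finset.univ.erase i, h j (x j) :=
    Finset.prod_congr rfl fun j hj => by rw [Function.update_of_ne (Finset.ne_of_mem_erase hj)]
  rw [htail]
  simp [mul_comm]

theorem pdm_prod {h : Fin N → ℝ → ℝ} (hh : ∀ j, ContDiff ℝ (⊤ : ℕ∞) (h j)) (α : Fin N → ℕ) :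
    pdm α (fun x => ∏ j, h j (x j)) = fun x => ∏ j, iteratedDeriv (α j) (h j) (x j) := by
  have hsmooth : ContDiff ℝ (⊤ : ℕ∞) fun x : Euc N => ∏ j, h j (x j) :=
    contDiff_prod fun j _ => (hh j).comp (EuclideanSpace.proj j : Euc N →L[ℝ] ℝ).contDiff
  induction α using multiIndex_induction with
  | zero => simp [pdm_zero]
  | add_single α i ih =>
    rw [pdm_add_single α i hsmooth, ih,
      pd_prod fun j => (hh j).differentiable_iteratedDeriv (α j) (mod_cast ENat.natCast_lt_top _)]
    ext x
    refine Finset.prod_congr rfl fun j _ => ?_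
    rcases eq_or_ne j i with rfl | hji
    · simp [iteratedDeriv_succ]
    · simp [hji]

end PartialDerivatives

section WeightFunctions

variable {ω : ℝ → ℝ}

/-- Finiteness of the Young conjugate `φ*_ω` at `s`. Since `phiStar` is a supremum of reals, it
takes the value `0` where the Young conjugate is infinite. -/
def PhiStarFinite (ω : ℝ → ℝ) (s : ℝ) : Prop :=
  BddAbove {y : ℝ | ∃ t : ℝ, 0 ≤ t ∧ y = s * t - ω (Real.exp t)}

theorem PhiStarFinite.le_phiStar {s t : ℝ} (hs : PhiStarFinite ω s) (ht : 0 ≤ t) :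
    s * t - ω (Real.exp t) ≤ phiStar ω s :=
  le_csSup hs ⟨t, ht, rfl⟩

theorem neg_le_phiStar (hω1 : 0 ≤ ω 1) (s : ℝ) : -ω 1 ≤ phiStar ω s := by
  by_cases hs : PhiStarFinite ω s
  · simpa using hs.le_phiStar le_rfl
  · rw [phiStar, Real.sSup_of_not_bddAbove hs]
    linarith

theorem factorial_le_exp_phiStar {A lam : ℝ} (hA : ∀ t, 0 ≤ t → ω t ≤ A * (1 + t))
    (hlam : 0 < lam) (n : ℕ) (hfin : PhiStarFinite ω (n / lam)) :
    (n.factorial : ℝ) ≤ Real.exp (lam * A * (n + 2)) * Real.exp (lam * phiStar ω (n / lam)) := by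
  have hn : (0 : ℝ) < n + 1 := by positivity
  have hphi := hfin.le_phiStar (Real.log_nonneg (by simp : (1 : ℝ) ≤ n + 1))
  rw [Real.exp_log hn] at hphi
  have hω := hA (n + 1) hn.le
  calc (n.factorial : ℝ) ≤ (n + 1) ^ n := by
        exact_mod_cast n.factorial_le_pow.trans (Nat.pow_le_pow_left n.le_succ n)
    _ = Real.exp (n * Real.log (n + 1)) := by rw [Real.exp_nat_mul, Real.exp_log hn]
    _ = Real.exp (lam * (n / lam * Real.log (n + 1))) := by field_simp
    _ ≤ Real.exp (lam * (A * (n + 2) + phiStar ω (n / lam))) := by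
        gcongr
        linarith
    _ = Real.exp (lam * A * (n + 2)) * Real.exp (lam * phiStar ω (n / lam)) := by
        rw [← Real.exp_add]
        ring_nf

namespace IsWeightFun

theorem exists_add_le (hω : IsWeightFun ω) :
    ∃ K : ℝ, 1 ≤ K ∧ ∀ s t, 0 ≤ s → 0 ≤ t → ω (s + t) ≤ K * (1 + ω s + ω t) := by
  obtain ⟨K, hK, hdouble⟩ := hω.alpha
  have of_le {s t : ℝ} (hs : 0 ≤ s) (hst : s ≤ t) : ω (s + t) ≤ K * (1 + ω s + ω t) := by
    have ht := hs.trans hst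
    calc ω (s + t) ≤ ω (2 * t) :=
          hω.mono (add_nonneg hs ht) (mul_nonneg zero_le_two ht) (by linarith)
      _ ≤ K * (1 + ω t) := hdouble t ht
      _ ≤ K * (1 + ω s + ω t) := by gcongr; linarith [hω.nonneg s hs]
  refine ⟨K, hK, fun s t hs ht => ?_⟩
  rcases le_total s t with hst | hts
  · exact of_le hs hst
  · simpa only [add_comm s t, add_right_comm 1 (ω s)] using of_le ht hts

-- Compare `ω` on `[t, 2t]`, where it is at least `ω t`, with the integral in condition `(β)`.
theorem mul_le_integral (hω : IsWeightFun ω) {t : ℝ} (ht : 1 ≤ t) :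
    t * (ω t / (1 + (2 * t) ^ 2)) ≤ ∫ s in Ici (1 : ℝ), ω s / (1 + s ^ 2) := by
  have ht0 : 0 ≤ t := zero_le_one.trans ht
  have hsub : Icc t (2 * t) ⊆ Ici 1 := fun s hs => ht.trans hs.1
  have hnonneg (s : ℝ) (hs : s ∈ Ici (1 : ℝ)) : 0 ≤ ω s / (1 + s ^ 2) :=
    div_nonneg (hω.nonneg s (zero_le_one.trans hs)) (by positivity)
  have hlower (s : ℝ) (hs : s ∈ Icc t (2 * t)) :
      ω t / (1 + (2 * t) ^ 2) ≤ ω s / (1 + s ^ 2) := by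
    have hs0 : 0 ≤ s := ht0.trans hs.1
    have hmono := hω.mono ht0 hs0 hs.1
    have hωs := hω.nonneg s hs0
    have hs2 := hs.2
    gcongr
  calc t * (ω t / (1 + (2 * t) ^ 2))
      = ω t / (1 + (2 * t) ^ 2) * MeasureTheory.volume.real (Icc t (2 * t)) := by
        rw [Real.volume_real_Icc_of_le (by linarith)]
        ring
    _ ≤ ∫ s in Icc t (2 * t), ω s / (1 + s ^ 2) :=
        MeasureTheory.setIntegral_ge_of_const_le_real measurableSet_Icc (by simp) hlower
          (hω.beta.mono_set hsub)
    _ ≤ ∫ s in Ici (1 : ℝ), ω s / (1 + s ^ 2) :=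
        MeasureTheory.setIntegral_mono_set hω.beta
          ((MeasureTheory.ae_restrict_iff' measurableSet_Ici).2 (Eventually.of_forall hnonneg))
          hsub.eventuallyLE

theorem exists_le_linear (hω : IsWeightFun ω) :
    ∃ A : ℝ, ∀ t, 0 ≤ t → ω t ≤ A * (1 + t) := by
  set I := ∫ s in Ici (1 : ℝ), ω s / (1 + s ^ 2)
  have hω1 : 0 ≤ ω 1 := hω.nonneg 1 zero_le_one
  have hI : 0 ≤ I := (by positivity : 0 ≤ 1 * (ω 1 / (1 + (2 * 1) ^ 2))).trans
    (hω.mul_le_integral le_rfl)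
  refine ⟨ω 1 + 5 * I, fun t ht => ?_⟩
  rcases le_total t 1 with ht1 | ht1
  · calc ω t ≤ ω 1 := hω.mono ht (mem_Ici.2 zero_le_one) ht1
      _ ≤ (ω 1 + 5 * I) * (1 + t) := by nlinarith [mul_nonneg hω1 ht, mul_nonneg hI ht]
  · have hint : t * ω t ≤ I * (1 + (2 * t) ^ 2) := by
      have h := hω.mul_le_integral ht1
      rwa [mul_div_assoc', div_le_iff₀ (by positivity)] at h
    have hlin : t * ω t ≤ t * (5 * I * t) := hint.trans (by nlinarith [mul_nonneg hI ht])
    have h := le_of_mul_le_mul_left hlin (by linarith)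
    nlinarith [mul_nonneg hω1 ht]

theorem le_log_of_not_phiStarFinite (hω : IsWeightFun ω) {s : ℝ} (hs : ¬PhiStarFinite ω s)
    {t : ℝ} (ht : 0 ≤ t) : ω t ≤ ω 1 + |s| * Real.log (1 + t) := by
  have hexp (τ : ℝ) (hτ : 0 < τ) : ω (Real.exp τ) ≤ ω 1 + s * τ := by
    by_contra! hlt
    refine hs ⟨|s| * τ, ?_⟩
    rintro _ ⟨r, hr, rfl⟩
    have hsτ : 0 ≤ |s| * τ := by positivity
    rcases le_total r τ with hrτ | hτr
    · have hsr : s * r ≤ |s| * τ := mul_le_mul (le_abs_self s) hrτ hr (abs_nonneg s)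
      linarith [hω.nonneg _ (Real.exp_pos r).le]
    · have hr0 : 0 < r := hτ.trans_le hτr
      have hslope := hω.delta.secant_mono (mem_univ 0) (mem_univ τ) (mem_univ r) hτ.ne' hr0.ne' hτr
      simp only [Real.exp_zero, sub_zero] at hslope
      have hsr : s < (ω (Real.exp r) - ω 1) / r :=
        ((lt_div_iff₀ hτ).2 (by linarith)).trans_le hslope
      rw [lt_div_iff₀ hr0] at hsr
      linarith [hω.nonneg 1 zero_le_one]
  have hlog : 0 ≤ |s| * Real.log (1 + t) :=
    mul_nonneg (abs_nonneg s) (Real.log_nonneg (by linarith))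
  rcases le_or_gt t 1 with ht1 | ht1
  · linarith [hω.mono ht (mem_Ici.2 zero_le_one) ht1]
  · have ht0 : 0 < t := by linarith
    have h := hexp (Real.log t) (Real.log_pos ht1)
    rw [Real.exp_log ht0] at h
    have hmono : s * Real.log t ≤ |s| * Real.log (1 + t) :=
      mul_le_mul (le_abs_self s) (Real.log_le_log ht0 (by linarith)) (Real.log_nonneg ht1.le)
        (abs_nonneg s)
    linarith

end IsWeightFun

end WeightFunctions

section Translates

variable {N : ℕ} {ω : ℝ → ℝ} {χ : Euc N → ℝ}

theorem IsWeightFun.exists_exp_mul_le (hω : IsWeightFun ω) {E : Type*} [SeminormedAddCommGroup E] :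
    ∃ K : ℝ, 0 < K ∧ ∀ mu : ℝ, 0 ≤ mu → ∀ x a : E, Real.exp (mu * ω ‖x‖) ≤
      Real.exp (mu * K) * Real.exp (mu * K * ω ‖a‖) * Real.exp (mu * K * ω ‖x - a‖) := by
  obtain ⟨K, hK, hadd⟩ := hω.exists_add_le
  refine ⟨K, by linarith, fun mu hmu x a => ?_⟩
  have hx : ‖x‖ ≤ ‖a‖ + ‖x - a‖ := by simpa using norm_add_le a (x - a)
  have hweight : ω ‖x‖ ≤ K * (1 + ω ‖a‖ + ω ‖x - a‖) :=
    (hω.mono (norm_nonneg x) (by positivity : (0 : ℝ) ≤ ‖a‖ + ‖x - a‖) hx).trans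
      (hadd _ _ (norm_nonneg a) (norm_nonneg _))
  rw [← Real.exp_add, ← Real.exp_add]
  gcongr
  linarith [mul_le_mul_of_nonneg_left hweight hmu]

theorem MemS.exists_abs_pdm_le (hχ : MemS ω χ) (hω : IsWeightFun ω) (α : Fin N → ℕ) :
    ∃ C, ∀ x, |pdm α χ x| ≤ C := by
  obtain ⟨C, hC⟩ := hχ.2 1 1 one_pos one_pos
  refine ⟨_, fun x => le_trans ?_ (hC α x)⟩
  have hωx := hω.nonneg _ (norm_nonneg x)
  exact le_mul_of_one_le_left (abs_nonneg _) (Real.one_le_exp (by linarith))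

theorem norm_iteratedFDeriv_const_mul_comp_sub (hχ : ContDiff ℝ (⊤ : ℕ∞) χ) (k : ℕ) (c : ℝ)
    (a x : Euc N) : ‖iteratedFDeriv ℝ k (fun x => c * χ (x - a)) x‖ =
      |c| * ‖iteratedFDeriv ℝ k χ (x - a)‖ := by
  have hsmooth : ContDiff ℝ k fun x => χ (x - a) :=
    (hχ.of_le (mod_cast le_top)).comp (contDiff_id.sub contDiff_const)
  simp only [← smul_eq_mul c]
  rw [iteratedFDeriv_const_smul_apply' hsmooth.contDiffAt, norm_smul, iteratedFDeriv_comp_sub,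
    Real.norm_eq_abs]

theorem MemS.exists_exp_mul_abs_pdm_sub_le (hχ : MemS ω χ) (hω : IsWeightFun ω) {lam mu : ℝ}
    (hlam : 0 < lam) (hmu : 0 < mu) : ∃ M C : ℝ, ∀ (α : Fin N → ℕ) (x a : Euc N),
      Real.exp (mu * ω ‖x‖) * |pdm α χ (x - a)| ≤
        Real.exp (M * ω ‖a‖) * (C * Real.exp (lam * phiStar ω (msize α / lam))) := by
  obtain ⟨K, hK, hexp⟩ := hω.exists_exp_mul_le (E := Euc N)
  obtain ⟨C, hC⟩ := hχ.2 lam (mu * K) hlam (by positivity)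
  refine ⟨mu * K, Real.exp (mu * K) * C, fun α x a => ?_⟩
  set Φ := Real.exp (lam * phiStar ω (msize α / lam))
  calc Real.exp (mu * ω ‖x‖) * |pdm α χ (x - a)|
      ≤ Real.exp (mu * K) * Real.exp (mu * K * ω ‖a‖) * Real.exp (mu * K * ω ‖x - a‖) *
          |pdm α χ (x - a)| := by
        gcongr
        exact hexp mu hmu.le x a
    _ = Real.exp (mu * K) * Real.exp (mu * K * ω ‖a‖) *
          (Real.exp (mu * K * ω ‖x - a‖) * |pdm α χ (x - a)|) := by ring
    _ ≤ Real.exp (mu * K) * Real.exp (mu * K * ω ‖a‖) * (C * Φ) :=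
        mul_le_mul_of_nonneg_left (hC α (x - a)) (by positivity)
    _ = Real.exp (mu * K * ω ‖a‖) * (Real.exp (mu * K) * C * Φ) := by ring

variable {ι : Type*} {a : ι → Euc N} {c : ι → ℝ}

theorem MemS.summable_translate (hχ : MemS ω χ) (hω : IsWeightFun ω) (hc : Summable c)
    (x : Euc N) : Summable fun j => c j * χ (x - a j) := by
  obtain ⟨C, hC⟩ := hχ.exists_abs_pdm_le hω 0
  refine (hc.abs.mul_right C).of_norm_bounded fun j => ?_
  rw [norm_mul]
  exact mul_le_mul_of_nonneg_left (by simpa [pdm_zero] using hC (x - a j)) (norm_nonneg _)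

theorem MemS.tsum_translate (hχ : MemS ω χ) (hω : IsWeightFun ω)
    (hc : ∀ M : ℝ, Summable fun j => Real.exp (M * ω ‖a j‖) * |c j|) :
    MemS ω fun x => ∑' j, c j * χ (x - a j) := by
  have hc0 : Summable fun j => |c j| := by simpa using hc 0
  choose M hM using exists_norm_iteratedFDeriv_le hχ.1 (hχ.exists_abs_pdm_le hω)
  have hsmooth (j : ι) : ContDiff ℝ (⊤ : ℕ∞) fun x => c j * χ (x - a j) :=
    contDiff_const.mul (hχ.1.comp (contDiff_id.sub contDiff_const))
  have hbound (k : ℕ) (j : ι) (x : Euc N) :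
      ‖iteratedFDeriv ℝ k (fun x => c j * χ (x - a j)) x‖ ≤ |c j| * M k := by
    rw [norm_iteratedFDeriv_const_mul_comp_sub hχ.1]
    exact mul_le_mul_of_nonneg_left (hM k _) (abs_nonneg _)
  refine ⟨contDiff_tsum hsmooth (fun k _ => hc0.mul_right (M k)) fun k j x _ => hbound k j x,
    fun lam mu hlam hmu => ?_⟩
  obtain ⟨M', C, hC⟩ := hχ.exists_exp_mul_abs_pdm_sub_le hω hlam hmu
  refine ⟨(∑' j, Real.exp (M' * ω ‖a j‖) * |c j|) * C, fun α x => ?_⟩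
  set Φ := Real.exp (lam * phiStar ω (msize α / lam))
  have hterm (j : ι) : ‖Real.exp (mu * ω ‖x‖) * (c j * pdm α χ (x - a j))‖ ≤
      Real.exp (M' * ω ‖a j‖) * |c j| * (C * Φ) := by
    simp only [norm_mul, Real.norm_eq_abs, Real.abs_exp]
    linarith [mul_le_mul_of_nonneg_right (hC α x (a j)) (abs_nonneg (c j))]
  rw [pdm_tsum α hsmooth (fun k => hc0.mul_right (M k)) hbound]
  simp only [pdm_const_mul_comp_sub α hχ.1]
  calc Real.exp (mu * ω ‖x‖) * |∑' j, c j * pdm α χ (x - a j)|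
      = ‖∑' j, Real.exp (mu * ω ‖x‖) * (c j * pdm α χ (x - a j))‖ := by
        rw [tsum_mul_left, norm_mul, Real.norm_eq_abs, Real.norm_eq_abs, Real.abs_exp]
    _ ≤ (∑' j, Real.exp (M' * ω ‖a j‖) * |c j|) * (C * Φ) :=
        tsum_of_norm_bounded ((hc M').hasSum.mul_right _) hterm
    _ = (∑' j, Real.exp (M' * ω ‖a j‖) * |c j|) * C * Φ := (mul_assoc _ _ _).symm

theorem summable_exp_mul_half_pow_mul_exp {u : ℕ → ℝ} (hu : ∀ j, 0 ≤ u j) (M : ℝ) :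
    Summable fun j : ℕ => Real.exp (M * u j) * |(1 / 2) ^ j * Real.exp (-(j * u j))| := by
  refine summable_geometric_two.of_norm_bounded_eventually_nat ?_
  filter_upwards [eventually_ge_atTop ⌈M⌉₊] with j hj
  have hMj : M * u j ≤ j * u j := mul_le_mul_of_nonneg_right (Nat.ceil_le.1 hj) (hu j)
  rw [abs_of_nonneg (by positivity), mul_left_comm, ← Real.exp_add, Real.norm_of_nonneg
    (by positivity)]
  exact mul_le_of_le_one_right (by positivity) (Real.exp_le_one_iff.2 (by linarith))

end Translates

section Gaussian

theorem iteratedDeriv_re_comp_ofReal {f : ℂ → ℂ} (hf : Differentiable ℂ f) (n : ℕ) :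
    iteratedDeriv n (fun t : ℝ => (f t).re) = fun t : ℝ => (iteratedDeriv n f t).re := by
  induction n with
  | zero => simp
  | succ n ih =>
    ext t
    have hdiff := hf.contDiff.differentiable_iteratedDeriv (n := ⊤) n
      (WithTop.coe_lt_top _) t
    rw [iteratedDeriv_succ, iteratedDeriv_succ, ih]
    exact hdiff.hasDerivAt.real_of_complex.deriv

theorem abs_iteratedDeriv_gaussian_le (n : ℕ) (t : ℝ) {R : ℝ} (hR : 0 < R) :
    |iteratedDeriv n (fun t : ℝ => Real.exp (-t ^ 2)) t| ≤
      n.factorial * Real.exp (R ^ 2 - t ^ 2 / 2) / R ^ n := by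
  let f : ℂ → ℂ := fun z => Complex.exp (-z ^ 2)
  have hf : Differentiable ℂ f := by fun_prop
  have hre : (fun t : ℝ => Real.exp (-t ^ 2)) = fun t : ℝ => (f t).re := by
    ext t
    simp only [f]
    norm_cast
  have hsphere (z : ℂ) (hz : z ∈ Metric.sphere (t : ℂ) R) :
      ‖f z‖ ≤ Real.exp (R ^ 2 - t ^ 2 / 2) := by
    have hz2 : (z.re - t) ^ 2 + z.im ^ 2 = R ^ 2 := by
      rw [← mem_sphere_iff_norm.1 hz, Complex.sq_norm, Complex.normSq_apply]
      simp [sq]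
    rw [Complex.norm_exp]
    gcongr
    simp only [sq, Complex.neg_re, Complex.mul_re]
    nlinarith [sq_nonneg (2 * z.re - t)]
  rw [hre, iteratedDeriv_re_comp_ofReal hf]
  exact (Complex.abs_re_le_norm _).trans
    (Complex.norm_iteratedDeriv_le_of_forall_mem_sphere_norm_le n hR hf.diffContOnCl hsphere)

theorem exp_neg_norm_sq_eq_prod {N : ℕ} :
    (fun x : Euc N => Real.exp (-‖x‖ ^ 2)) = fun x => ∏ j, Real.exp (-x j ^ 2) := by
  ext x
  simp [← Real.exp_sum, EuclideanSpace.norm_sq_eq]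

theorem abs_pdm_gaussian_le {N : ℕ} (α : Fin N → ℕ) (x : Euc N) {R : ℝ} (hR : 0 < R) :
    |pdm α (fun x => Real.exp (-‖x‖ ^ 2)) x| ≤
      (msize α).factorial * Real.exp (N * R ^ 2 - ‖x‖ ^ 2 / 2) / R ^ msize α := by
  have hfact : ∏ j, ((α j).factorial : ℝ) ≤ (msize α).factorial := by
    exact_mod_cast Nat.le_of_dvd (Nat.factorial_pos _)
      (Nat.prod_factorial_dvd_factorial_sum Finset.univ α)
  rw [exp_neg_norm_sq_eq_prod, pdm_prod (h := fun _ t => Real.exp (-t ^ 2))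
    (fun _ => by fun_prop), Finset.abs_prod]
  calc ∏ j, |iteratedDeriv (α j) (fun t : ℝ => Real.exp (-t ^ 2)) (x j)|
      ≤ ∏ j, (α j).factorial * Real.exp (R ^ 2 - x j ^ 2 / 2) / R ^ α j :=
        Finset.prod_le_prod (fun _ _ => abs_nonneg _)
          fun j _ => abs_iteratedDeriv_gaussian_le (α j) (x j) hR
    _ = (∏ j, ((α j).factorial : ℝ)) * Real.exp (N * R ^ 2 - ‖x‖ ^ 2 / 2) / R ^ msize α := by
        rw [Finset.prod_div_distrib, Finset.prod_mul_distrib, ← Real.exp_sum,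
          Finset.prod_pow_eq_pow_sum, msize, EuclideanSpace.norm_sq_eq]
        simp [Finset.sum_div]
    _ ≤ _ := by gcongr

theorem IsWeightFun.memS_gaussian {N : ℕ} {ω : ℝ → ℝ} (hω : IsWeightFun ω)
    (hfin : ∀ s, PhiStarFinite ω s) : MemS ω fun x : Euc N => Real.exp (-‖x‖ ^ 2) := by
  obtain ⟨A, hωA⟩ := hω.exists_le_linear
  refine ⟨(contDiff_norm_sq ℝ).neg.exp, fun lam mu hlam hmu => ?_⟩
  set R := Real.exp (lam * A)
  set D := mu * A + (mu * A) ^ 2 / 2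
  refine ⟨Real.exp (lam * A * 2) * Real.exp (D + N * R ^ 2), fun α x => ?_⟩
  set Φ := Real.exp (lam * phiStar ω (msize α / lam))
  have hfact : ((msize α).factorial : ℝ) / R ^ msize α ≤ Real.exp (lam * A * 2) * Φ := by
    rw [div_le_iff₀ (by positivity), ← Real.exp_nat_mul]
    refine (factorial_le_exp_phiStar hωA hlam (msize α) (hfin _)).trans_eq ?_
    rw [mul_add, Real.exp_add, mul_comm (lam * A) (msize α : ℝ)]
    ring
  have hweight : mu * ω ‖x‖ - ‖x‖ ^ 2 / 2 ≤ D := by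
    have hlin := mul_le_mul_of_nonneg_left (hωA ‖x‖ (norm_nonneg x)) hmu.le
    have hsq := sq_nonneg (mu * A - ‖x‖)
    simp only [D]
    linarith
  calc Real.exp (mu * ω ‖x‖) * |pdm α (fun x => Real.exp (-‖x‖ ^ 2)) x|
      ≤ Real.exp (mu * ω ‖x‖) *
          ((msize α).factorial * Real.exp (N * R ^ 2 - ‖x‖ ^ 2 / 2) / R ^ msize α) := by
        gcongr
        exact abs_pdm_gaussian_le α x (Real.exp_pos _)
    _ = (msize α).factorial / R ^ msize α *
          Real.exp (mu * ω ‖x‖ - ‖x‖ ^ 2 / 2 + N * R ^ 2) := by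
        rw [show mu * ω ‖x‖ - ‖x‖ ^ 2 / 2 + N * R ^ 2 =
          mu * ω ‖x‖ + (N * R ^ 2 - ‖x‖ ^ 2 / 2) by ring, Real.exp_add]
        ring
    _ ≤ Real.exp (lam * A * 2) * Φ * Real.exp (D + N * R ^ 2) := by gcongr
    _ = Real.exp (lam * A * 2) * Real.exp (D + N * R ^ 2) * Φ := mul_right_comm _ _ _

end Gaussian

section BandLimited

open scoped FourierTransform

variable {E F : Type*} [NormedAddCommGroup E] [NormedSpace ℝ E] [NormedAddCommGroup F]
  [NormedSpace ℝ F]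

/-- Schwartz functions of exponential type at most `ρ`, such as the Fourier transforms of smooth
functions supported in a ball. The exponential type is encoded by bounds on the derivatives: the
`n`-th one grows at most like `ρ ^ n`, uniformly on `E` and with any polynomial weight. -/
def IsBandLimited (ρ : ℝ) (f : E → F) : Prop :=
  ContDiff ℝ (⊤ : ℕ∞) f ∧ ∀ p : ℕ, ∃ C : ℝ, ∀ (n : ℕ) (x : E),
    (1 + ‖x‖) ^ p * ‖iteratedFDeriv ℝ n f x‖ ≤ C * ρ ^ n

namespace IsBandLimited

variable {ρ σ : ℝ}

theorem clm_comp {G : Type*} [NormedAddCommGroup G] [NormedSpace ℝ G] {f : E → F}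
    (hf : IsBandLimited ρ f) (L : F →L[ℝ] G) : IsBandLimited ρ fun x => L (f x) := by
  refine ⟨L.contDiff.comp hf.1, fun p => ?_⟩
  obtain ⟨C, hC⟩ := hf.2 p
  refine ⟨‖L‖ * C, fun n x => ?_⟩
  calc (1 + ‖x‖) ^ p * ‖iteratedFDeriv ℝ n (fun x => L (f x)) x‖
      ≤ (1 + ‖x‖) ^ p * (‖L‖ * ‖iteratedFDeriv ℝ n f x‖) := by
        gcongr
        exact L.norm_iteratedFDeriv_comp_left hf.1.contDiffAt (mod_cast le_top)
    _ = ‖L‖ * ((1 + ‖x‖) ^ p * ‖iteratedFDeriv ℝ n f x‖) := mul_left_comm _ _ _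
    _ ≤ ‖L‖ * (C * ρ ^ n) := mul_le_mul_of_nonneg_left (hC n x) (norm_nonneg L)
    _ = ‖L‖ * C * ρ ^ n := (mul_assoc _ _ _).symm

theorem comp_smul {f : E → F} (hf : IsBandLimited ρ f) {c : ℝ} (hc : 0 < c) :
    IsBandLimited (c * ρ) fun x => f (c • x) := by
  refine ⟨hf.1.comp (contDiff_const_smul c), fun p => ?_⟩
  obtain ⟨C, hC⟩ := hf.2 p
  refine ⟨(1 + c⁻¹) ^ p * C, fun n x => ?_⟩
  have hx : 1 + ‖x‖ ≤ (1 + c⁻¹) * (1 + ‖c • x‖) := by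
    have hcx : c⁻¹ * ‖c • x‖ = ‖x‖ := by
      rw [norm_smul, Real.norm_of_nonneg hc.le, inv_mul_cancel_left₀ hc.ne']
    have hc' := inv_nonneg.2 hc.le
    linarith [norm_nonneg (c • x)]
  calc (1 + ‖x‖) ^ p * ‖iteratedFDeriv ℝ n (fun x => f (c • x)) x‖
      = (1 + ‖x‖) ^ p * (c ^ n * ‖iteratedFDeriv ℝ n f (c • x)‖) := by
        rw [iteratedFDeriv_comp_const_smul c (hf.1.of_le (mod_cast le_top)), norm_smul,
          Real.norm_of_nonneg (by positivity)]
    _ ≤ ((1 + c⁻¹) * (1 + ‖c • x‖)) ^ p * (c ^ n * ‖iteratedFDeriv ℝ n f (c • x)‖) := by gcongr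
    _ = (1 + c⁻¹) ^ p * c ^ n * ((1 + ‖c • x‖) ^ p * ‖iteratedFDeriv ℝ n f (c • x)‖) := by
        rw [mul_pow]
        ring
    _ ≤ (1 + c⁻¹) ^ p * c ^ n * (C * ρ ^ n) :=
        mul_le_mul_of_nonneg_left (hC n _) (by positivity)
    _ = (1 + c⁻¹) ^ p * C * (c * ρ) ^ n := by
        rw [mul_pow]
        ring

theorem mul {A : Type*} [NormedRing A] [NormedAlgebra ℝ A] {f g : E → A}
    (hf : IsBandLimited ρ f) (hg : IsBandLimited σ g) :
    IsBandLimited (ρ + σ) fun x => f x * g x := by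
  refine ⟨hf.1.mul hg.1, fun p => ?_⟩
  obtain ⟨C, hC⟩ := hf.2 p
  obtain ⟨D, hD⟩ := hg.2 0
  refine ⟨C * D, fun n x => ?_⟩
  have hD' (k : ℕ) : ‖iteratedFDeriv ℝ k g x‖ ≤ D * σ ^ k := by simpa using hD k x
  have hterm (i j : ℕ) : (1 + ‖x‖) ^ p * ‖iteratedFDeriv ℝ i f x‖ * ‖iteratedFDeriv ℝ j g x‖ ≤
      C * ρ ^ i * (D * σ ^ j) :=
    mul_le_mul (hC i x) (hD' j) (norm_nonneg _) ((by positivity : (0 : ℝ) ≤ _).trans (hC i x))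
  calc (1 + ‖x‖) ^ p * ‖iteratedFDeriv ℝ n (fun x => f x * g x) x‖
      ≤ (1 + ‖x‖) ^ p * ∑ i ∈ Finset.range (n + 1), n.choose i *
          ‖iteratedFDeriv ℝ i f x‖ * ‖iteratedFDeriv ℝ (n - i) g x‖ := by
        gcongr
        exact norm_iteratedFDeriv_mul_le hf.1 hg.1 x (mod_cast le_top)
    _ = ∑ i ∈ Finset.range (n + 1), n.choose i *
          ((1 + ‖x‖) ^ p * ‖iteratedFDeriv ℝ i f x‖ * ‖iteratedFDeriv ℝ (n - i) g x‖) := by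
        rw [Finset.mul_sum]
        exact Finset.sum_congr rfl fun i _ => by ring
    _ ≤ ∑ i ∈ Finset.range (n + 1), n.choose i * (C * ρ ^ i * (D * σ ^ (n - i))) := by
        exact Finset.sum_le_sum fun i _ =>
          mul_le_mul_of_nonneg_left (hterm i (n - i)) (by positivity)
    _ = C * D * (ρ + σ) ^ n := by
        rw [add_pow, Finset.mul_sum]
        exact Finset.sum_congr rfl fun i _ => by ring

end IsBandLimited

theorem integrable_pow_mul_norm_iteratedFDeriv [MeasurableSpace E] [OpensMeasurableSpace E]
    {μ : MeasureTheory.Measure E} [MeasureTheory.IsFiniteMeasureOnCompacts μ] {f : E → F}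
    (hf : ContDiff ℝ (⊤ : ℕ∞) f) (hsupp : HasCompactSupport f) (k n : ℕ) :
    MeasureTheory.Integrable (fun v => ‖v‖ ^ k * ‖iteratedFDeriv ℝ n f v‖) μ :=
  ((continuous_norm.pow k).mul
    (hf.continuous_iteratedFDeriv (mod_cast le_top)).norm).integrable_of_hasCompactSupport
      (hsupp.iteratedFDeriv n).norm.mul_left

theorem integral_pow_mul_norm_iteratedFDeriv_le [ProperSpace E] [MeasurableSpace E]
    [OpensMeasurableSpace E] {μ : MeasureTheory.Measure E}
    [MeasureTheory.IsFiniteMeasureOnCompacts μ] {f : E → F} (hf : ContDiff ℝ (⊤ : ℕ∞) f)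
    (hsupp : tsupport f ⊆ Metric.closedBall 0 1) (k n : ℕ) :
    ∫ v, ‖v‖ ^ k * ‖iteratedFDeriv ℝ n f v‖ ∂μ ≤ ∫ v, ‖iteratedFDeriv ℝ n f v‖ ∂μ := by
  have hint := integrable_pow_mul_norm_iteratedFDeriv (μ := μ) hf
    ((isCompact_closedBall 0 1).of_isClosed_subset (isClosed_tsupport f) hsupp)
  refine MeasureTheory.integral_mono (hint k n) (by simpa using hint 0 n) fun v => ?_
  rcases eq_or_ne (iteratedFDeriv ℝ n f v) 0 with hv | hv
  · simp [hv]
  · have hv1 : ‖v‖ ≤ 1 := by simpa using hsupp (support_iteratedFDeriv_subset n hv)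
    exact mul_le_of_le_one_left (norm_nonneg _) (pow_le_one₀ (norm_nonneg v) hv1)

theorem succ_pow_le (k p : ℕ) : (k + 1 : ℝ) ^ p ≤ p.factorial * Real.exp 1 * 3 ^ k := by
  have h := Real.pow_div_factorial_le_exp (k + 1 : ℝ) (by positivity) p
  rw [div_le_iff₀' (by positivity), add_comm, Real.exp_add, ← Real.exp_one_pow, ← mul_assoc] at h
  rw [add_comm]
  refine h.trans ?_
  gcongr
  exact Real.exp_one_lt_three.le

variable {V W : Type*} [NormedAddCommGroup V] [InnerProductSpace ℝ V] [FiniteDimensional ℝ V]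
  [MeasurableSpace V] [BorelSpace V] [NormedAddCommGroup W] [NormedSpace ℂ W]

theorem exists_norm_pow_mul_iteratedFDeriv_fourier_le {f : V → W}
    (hf : ContDiff ℝ (⊤ : ℕ∞) f) (hsupp : tsupport f ⊆ Metric.closedBall 0 1) (p : ℕ) :
    ∃ C, ∀ (k : ℕ) (x : V), ‖x‖ ^ p * ‖iteratedFDeriv ℝ k (𝓕 f) x‖ ≤ C * (6 * π) ^ k := by
  have hint := integrable_pow_mul_norm_iteratedFDeriv (μ := MeasureTheory.volume) hf
    ((isCompact_closedBall 0 1).of_isClosed_subset (isClosed_tsupport f) hsupp)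
  set J := ∑ n ∈ Finset.range (p + 1), ∫ v, ‖iteratedFDeriv ℝ n f v‖
  have hsum (k : ℕ) : ∑ q ∈ Finset.range (k + 1) ×ˢ Finset.range (p + 1),
      ∫ v, ‖v‖ ^ q.1 * ‖iteratedFDeriv ℝ q.2 f v‖ ≤ (k + 1) * J := by
    rw [Finset.sum_product]
    refine (Finset.sum_le_sum fun i _ => Finset.sum_le_sum fun n _ =>
      integral_pow_mul_norm_iteratedFDeriv_le hf hsupp i n).trans_eq ?_
    simp [J]
  refine ⟨2 ^ p * J * ((p + 1).factorial * Real.exp 1), fun k x => ?_⟩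
  calc ‖x‖ ^ p * ‖iteratedFDeriv ℝ k (𝓕 f) x‖
      ≤ (2 * π) ^ k * (2 * k + 2) ^ p * ((k + 1) * J) := by
        refine (Real.pow_mul_norm_iteratedFDeriv_fourier_le (K := ⊤) (N := ⊤) hf
          (fun k n _ _ => hint k n) le_top le_top x).trans ?_
        gcongr
        exact hsum k
    _ = (2 * π) ^ k * (2 ^ p * J) * (k + 1) ^ (p + 1) := by
        rw [show (2 * k + 2 : ℝ) = 2 * (k + 1) by ring, mul_pow 2 (k + 1 : ℝ)]
        ring
    _ ≤ (2 * π) ^ k * (2 ^ p * J) * ((p + 1).factorial * Real.exp 1 * 3 ^ k) := by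
        gcongr
        exact succ_pow_le k (p + 1)
    _ = 2 ^ p * J * ((p + 1).factorial * Real.exp 1) * (6 * π) ^ k := by
        rw [show 6 * π = 2 * π * 3 by ring, mul_pow (2 * π)]
        ring

theorem isBandLimited_fourier {f : V → W} (hf : ContDiff ℝ (⊤ : ℕ∞) f)
    (hsupp : tsupport f ⊆ Metric.closedBall 0 1) : IsBandLimited (6 * π) (𝓕 f) := by
  have hint := integrable_pow_mul_norm_iteratedFDeriv (μ := MeasureTheory.volume) hf
    ((isCompact_closedBall 0 1).of_isClosed_subset (isClosed_tsupport f) hsupp)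
  refine ⟨Real.contDiff_fourier fun n _ => by simpa using hint n 0, fun p => ?_⟩
  obtain ⟨C, hC⟩ := exists_norm_pow_mul_iteratedFDeriv_fourier_le hf hsupp p
  obtain ⟨D, hD⟩ := exists_norm_pow_mul_iteratedFDeriv_fourier_le hf hsupp 0
  refine ⟨2 ^ (p - 1) * (D + C), fun n x => ?_⟩
  calc (1 + ‖x‖) ^ p * ‖iteratedFDeriv ℝ n (𝓕 f) x‖
      ≤ 2 ^ (p - 1) * (1 ^ p + ‖x‖ ^ p) * ‖iteratedFDeriv ℝ n (𝓕 f) x‖ := by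
        gcongr
        exact add_pow_le zero_le_one (norm_nonneg x) p
    _ = 2 ^ (p - 1) * (‖x‖ ^ 0 * ‖iteratedFDeriv ℝ n (𝓕 f) x‖ +
          ‖x‖ ^ p * ‖iteratedFDeriv ℝ n (𝓕 f) x‖) := by ring
    _ ≤ 2 ^ (p - 1) * (D * (6 * π) ^ n + C * (6 * π) ^ n) := by
        exact mul_le_mul_of_nonneg_left (add_le_add (hD n x) (hC n x)) (by positivity)
    _ = 2 ^ (p - 1) * (D + C) * (6 * π) ^ n := by ring

theorem exists_isBandLimited_ne_zero : ∃ g : V → ℝ, IsBandLimited (6 * π) g ∧ g 0 ≠ 0 := by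
  let b : ContDiffBump (0 : V) := ⟨1 / 2, 1, by norm_num, by norm_num⟩
  let f : V → ℂ := fun v => b v
  have hf : ContDiff ℝ (⊤ : ℕ∞) f := Complex.ofRealCLM.contDiff.comp b.contDiff
  have hsupp : tsupport f ⊆ Metric.closedBall 0 1 :=
    (closure_mono fun v hv => by simpa [f] using hv).trans b.tsupport_eq.subset
  refine ⟨fun x => Complex.reCLM (𝓕 f x), (isBandLimited_fourier hf hsupp).clm_comp _, ?_⟩
  have hzero : 𝓕 f 0 = ((∫ v, b v : ℝ) : ℂ) := by
    simpa [Real.fourier_eq, f] using integral_ofReal (𝕜 := ℂ) (f := b)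
  simpa [hzero] using b.integral_pos.ne'

theorem exists_isBandLimited_one_nonneg_pos :
    ∃ χ : V → ℝ, IsBandLimited 1 χ ∧ (∀ x, 0 ≤ χ x) ∧ 0 < χ 0 := by
  obtain ⟨g, hg, hg0⟩ := exists_isBandLimited_ne_zero (V := V)
  refine ⟨fun x => g ((12 * π)⁻¹ • x) * g ((12 * π)⁻¹ • x), ?_, fun x => mul_self_nonneg _, ?_⟩
  · have h := (hg.mul hg).comp_smul (inv_pos.2 (by positivity : 0 < 12 * π))
    rwa [show (12 * π)⁻¹ * (6 * π + 6 * π) = 1 by field_simp; norm_num] at h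
  · simpa using hg0

end BandLimited

section PositiveFunction

variable {N : ℕ} {ω : ℝ → ℝ}

theorem exp_mul_le_one_add_pow {A B mu t : ℝ} (hmu : 0 ≤ mu) (ht : 0 ≤ t)
    (hωt : ω t ≤ B + A * Real.log (1 + t)) :
    Real.exp (mu * ω t) ≤ Real.exp (mu * B) * (1 + t) ^ ⌈mu * A⌉₊ := by
  have hlog : 0 ≤ Real.log (1 + t) := Real.log_nonneg (by linarith)
  have hceil := mul_le_mul_of_nonneg_right (Nat.le_ceil (mu * A)) hlog
  rw [← Real.rpow_natCast, Real.rpow_def_of_pos (by linarith), ← Real.exp_add, Real.exp_le_exp]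
  linarith [mul_le_mul_of_nonneg_left hωt hmu]

theorem IsBandLimited.memS {χ : Euc N → ℝ} (hχ : IsBandLimited 1 χ) {A B : ℝ} (hω1 : 0 ≤ ω 1)
    (hlog : ∀ t, 0 ≤ t → ω t ≤ B + A * Real.log (1 + t)) : MemS ω χ := by
  refine ⟨hχ.1, fun lam mu hlam hmu => ?_⟩
  obtain ⟨C, hC⟩ := hχ.2 ⌈mu * A⌉₊
  have hC0 : 0 ≤ C := (abs_nonneg (χ 0)).trans (by simpa using hC 0 0)
  refine ⟨Real.exp (mu * B) * C * Real.exp (lam * ω 1), fun α x => ?_⟩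
  have hphi : 1 ≤ Real.exp (lam * ω 1) * Real.exp (lam * phiStar ω (msize α / lam)) := by
    rw [← Real.exp_add]
    refine Real.one_le_exp ?_
    linarith [mul_le_mul_of_nonneg_left (neg_le_phiStar hω1 (msize α / lam)) hlam.le]
  calc Real.exp (mu * ω ‖x‖) * |pdm α χ x|
      ≤ Real.exp (mu * B) * (1 + ‖x‖) ^ ⌈mu * A⌉₊ * ‖iteratedFDeriv ℝ (msize α) χ x‖ := by
        gcongr
        exacts [exp_mul_le_one_add_pow hmu.le (norm_nonneg x) (hlog _ (norm_nonneg x)),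
          abs_pdm_le α hχ.1 x]
    _ ≤ Real.exp (mu * B) * C := by
        rw [mul_assoc]
        gcongr
        simpa using hC (msize α) x
    _ ≤ Real.exp (mu * B) * C *
          (Real.exp (lam * ω 1) * Real.exp (lam * phiStar ω (msize α / lam))) :=
        le_mul_of_one_le_right (by positivity) hphi
    _ = _ := (mul_assoc _ _ _).symm

theorem IsWeightFun.exists_memS_nonneg_pos (hω : IsWeightFun ω) :
    ∃ χ : Euc N → ℝ, MemS ω χ ∧ (∀ x, 0 ≤ χ x) ∧ 0 < χ 0 := by
  by_cases hfin : ∀ s, PhiStarFinite ω s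
  · exact ⟨_, hω.memS_gaussian hfin, fun x => (Real.exp_pos _).le, Real.exp_pos _⟩
  · obtain ⟨s, hs⟩ := not_forall.1 hfin
    obtain ⟨χ, hχ, hχ0, hpos⟩ := exists_isBandLimited_one_nonneg_pos (V := Euc N)
    exact ⟨χ, hχ.memS (hω.nonneg 1 zero_le_one) fun _ => hω.le_log_of_not_phiStarFinite hs, hχ0,
      hpos⟩

end PositiveFunction

section GlidingHump

variable {N : ℕ} {ω : ℝ → ℝ}

theorem IsWeightFun.exists_memS_le_apply (hω : IsWeightFun ω) (a : ℕ → Euc N) :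
    ∃ g : Euc N → ℝ, MemS ω g ∧ ∃ c > 0, ∀ j : ℕ,
      c * ((1 / 2) ^ j * Real.exp (-(j * ω ‖a j‖))) ≤ g (a j) := by
  obtain ⟨χ, hχ, hχ0, hpos⟩ := hω.exists_memS_nonneg_pos (N := N)
  let c (j : ℕ) : ℝ := (1 / 2) ^ j * Real.exp (-(j * ω ‖a j‖))
  have hc (M : ℝ) : Summable fun j => Real.exp (M * ω ‖a j‖) * |c j| :=
    summable_exp_mul_half_pow_mul_exp (fun j => hω.nonneg _ (norm_nonneg (a j))) M
  have hterm (x : Euc N) (j : ℕ) : 0 ≤ c j * χ (x - a j) :=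
    mul_nonneg (by positivity) (hχ0 _)
  refine ⟨_, hχ.tsum_translate hω hc, χ 0, hpos, fun j => ?_⟩
  have hsum := hχ.summable_translate hω (a := a) (summable_abs_iff.1 (by simpa using hc 0)) (a j)
  simpa [mul_comm, c] using hsum.le_tsum j fun i _ => hterm (a j) i

theorem IsWeightFun.exists_le_exp_of_forall_memS (hω : IsWeightFun ω) {ι : Type*}
    (F : ι → Euc N → ℝ) (hF : ∀ g, MemS ω g → ∃ C, ∀ i x, |g x| * F i x ≤ C) :
    ∃ n : ℕ, ∃ C, ∀ i x, F i x ≤ C * Real.exp (n * ω ‖x‖) := by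
  by_contra! hlarge
  choose i a ha using fun j : ℕ => hlarge j (4 ^ j)
  obtain ⟨g, hg, c, hc, hga⟩ := hω.exists_memS_le_apply a
  obtain ⟨C, hC⟩ := hF g hg
  have hbound (j : ℕ) : c * 2 ^ j ≤ C := by
    calc c * 2 ^ j = c * ((1 / 2) ^ j * Real.exp (-(j * ω ‖a j‖))) *
            (4 ^ j * Real.exp (j * ω ‖a j‖)) := by
          rw [Real.exp_neg, one_div_pow, show (4 : ℝ) = 2 * 2 by norm_num, mul_pow]
          field_simp
      _ ≤ |g (a j)| * F (i j) (a j) :=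
          mul_le_mul ((hga j).trans (le_abs_self _)) (ha j).le (by positivity) (abs_nonneg _)
      _ ≤ C := hC _ _
  obtain ⟨j, hj⟩ := pow_unbounded_of_one_lt (C / c) one_lt_two
  rw [div_lt_iff₀' hc] at hj
  exact hj.not_ge (hbound j)

end GlidingHump

theorem bounded_in_Osm_bounded_in_Omn_general {N : ℕ} (ω : ℝ → ℝ) (hω : IsWeightFun ω)
    (m : ℕ) (hm : 0 < m) (B : Set (Euc N → ℝ)) (hB : ∀ f ∈ B, ContDiff ℝ (⊤ : ℕ∞) f)
    (hBbdd : ∀ g : Euc N → ℝ, MemS ω g → ∃ C : ℝ, ∀ f ∈ B, ∀ (α : Fin N → ℕ) (x : Euc N),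
      |g x| * |pdm α f x| * Real.exp (-(m : ℝ) * phiStar ω ((msize α : ℝ) / m)) ≤ C) :
    ∃ n₀ : ℕ, ∃ C : ℝ, ∀ f ∈ B, ∀ (α : Fin N → ℕ) (x : Euc N),
      |pdm α f x| * Real.exp (-(n₀ : ℝ) * ω ‖x‖ - (m : ℝ) * phiStar ω ((msize α : ℝ) / m)) ≤ C := by
  let F (i : B × (Fin N → ℕ)) (x : Euc N) : ℝ :=
    |pdm i.2 i.1 x| * Real.exp (-(m : ℝ) * phiStar ω (msize i.2 / m))
  have hF (g : Euc N → ℝ) (hg : MemS ω g) : ∃ C, ∀ i x, |g x| * F i x ≤ C := by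
    obtain ⟨C, hC⟩ := hBbdd g hg
    exact ⟨C, fun i x => by simpa only [F, mul_assoc] using hC i.1 i.1.2 i.2 x⟩
  obtain ⟨n, C, hC⟩ := hω.exists_le_exp_of_forall_memS F hF
  refine ⟨n, C, fun f hf α x => ?_⟩
  calc |pdm α f x| * Real.exp (-(n : ℝ) * ω ‖x‖ - m * phiStar ω (msize α / m))
      = F (⟨f, hf⟩, α) x / Real.exp (n * ω ‖x‖) := by
        rw [mul_div_assoc, ← Real.exp_sub]
        ring_nf
    _ ≤ C := (div_le_iff₀ (Real.exp_pos _)).2 (hC _ x)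

theorem bounded_in_Osm_bounded_in_Omn {N : ℕ} (ω : ℝ → ℝ) (hω : IsWeightFun ω)
    (hvan : ∀ t ∈ Set.Icc (0:ℝ) 1, ω t = 0)
    (m : ℕ) (hm : 0 < m) (B : Set (Euc N → ℝ))
    (hBmem : ∀ f ∈ B, ContDiff ℝ (⊤ : ℕ∞) f ∧ ∀ g : Euc N → ℝ, MemS ω g → qgBdd ω m g f)
    (hBbdd : ∀ g : Euc N → ℝ, MemS ω g → ∃ C : ℝ, ∀ f ∈ B, ∀ (α : Fin N → ℕ) (x : Euc N),
      |g x| * |pdm α f x| * Real.exp (-(m : ℝ) * phiStar ω ((msize α : ℝ) / m)) ≤ C) :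
    ∃ n₀ : ℕ, ∃ C : ℝ, ∀ f ∈ B, ∀ (α : Fin N → ℕ) (x : Euc N),
      |pdm α f x| * Real.exp (-(n₀ : ℝ) * ω ‖x‖ - (m : ℝ) * phiStar ω ((msize α : ℝ) / m)) ≤ C :=
  bounded_in_Osm_bounded_in_Omn_general ω hω m hm B (fun f hf => (hBmem f hf).1) hBbdd
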